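/- arXiv:1204.0074 — 2 statements merged into one kernel-verified Lean document; each statement's English description precedes it below -/
import Mathlib

section
/- Let X be a nonempty compact Hausdorff space. Then the set I(X) of all idempotent probability measures on X is a compact subset of the product space ℝ^{C(X, ℝ)} equipped with the product (pointwise convergence) topology. -/
/-- A functional `μ : C(X, ℝ) → ℝ` is an idempotent probability measure if it
sends constants to their values, is additive with respect to adding constants,
and turns pointwise maxima into maxima. -/
def IsIdempotentProbabilityMeasure {X : Type*} [TopologicalSpace X]
    (μ : C(X, ℝ) → ℝ) : Prop :=
  (∀ c : ℝ, μ (ContinuousMap.const X c) = c) ∧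
  (∀ (c : ℝ) (φ : C(X, ℝ)), μ (φ + ContinuousMap.const X c) = μ φ + c) ∧
  (∀ φ ψ : C(X, ℝ), μ (φ ⊔ ψ) = max (μ φ) (μ ψ))

/-!
An idempotent probability measure `μ` preserves suprema, so it is monotone and `μ φ` lies in every
interval containing the values of `φ`. Hence `I(X)` sits inside a product of compact intervals,
which is compact by Tychonoff's theorem, and it is closed there because each defining equation
involves only finitely many coordinates of `μ`.
-/

section

variable {X : Type*} [TopologicalSpace X]

namespace IsIdempotentProbabilityMeasure

variable {μ : C(X, ℝ) → ℝ}

theorem monotone (hμ : IsIdempotentProbabilityMeasure μ) : Monotone μ :=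
  OrderHomClass.mono (⟨μ, hμ.2.2⟩ : SupHom C(X, ℝ) ℝ)

theorem apply_mem_Icc (hμ : IsIdempotentProbabilityMeasure μ) {φ : C(X, ℝ)} {a b : ℝ}
    (hφ : Set.range φ ⊆ Set.Icc a b) : μ φ ∈ Set.Icc a b := by
  rw [Set.range_subset_iff] at hφ
  constructor
  · calc
      a = μ (.const X a) := (hμ.1 a).symm
      _ ≤ μ φ := hμ.monotone fun x => (hφ x).1
  · calc
      μ φ ≤ μ (.const X b) := hμ.monotone fun x => (hφ x).2
      _ = b := hμ.1 b

end IsIdempotentProbabilityMeasure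

theorem isClosed_setOf_isIdempotentProbabilityMeasure :
    IsClosed {μ : C(X, ℝ) → ℝ | IsIdempotentProbabilityMeasure μ} := by
  have h_const : IsClosed {μ : C(X, ℝ) → ℝ | ∀ c : ℝ, μ (.const X c) = c} := by
    simp only [Set.ofPred_forall]
    exact isClosed_iInter fun c => isClosed_eq (by fun_prop) (by fun_prop)
  have h_add_const : IsClosed
      {μ : C(X, ℝ) → ℝ | ∀ (c : ℝ) (φ : C(X, ℝ)), μ (φ + .const X c) = μ φ + c} := by
    simp only [Set.ofPred_forall]
    exact isClosed_iInter fun c => isClosed_iInter fun φ => isClosed_eq (by fun_prop) (by fun_prop)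
  have h_sup : IsClosed
      {μ : C(X, ℝ) → ℝ | ∀ φ ψ : C(X, ℝ), μ (φ ⊔ ψ) = max (μ φ) (μ ψ)} := by
    simp only [Set.ofPred_forall]
    exact isClosed_iInter fun φ => isClosed_iInter fun ψ => isClosed_eq (by fun_prop) (by fun_prop)
  exact h_const.inter (h_add_const.inter h_sup)

theorem isCompact_idempotentProbabilityMeasures_general
    (hX : ∀ φ : C(X, ℝ), Bornology.IsBounded (Set.range φ)) :
    IsCompact {μ : C(X, ℝ) → ℝ | IsIdempotentProbabilityMeasure μ} := by
  have h_box : IsCompact (Set.univ.pi fun φ : C(X, ℝ) =>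
      Set.Icc (sInf (Set.range φ)) (sSup (Set.range φ))) :=
    isCompact_univ_pi fun _ => isCompact_Icc
  refine h_box.of_isClosed_subset isClosed_setOf_isIdempotentProbabilityMeasure ?_
  exact fun μ hμ φ _ => hμ.apply_mem_Icc (hX φ).subset_Icc_sInf_sSup

end

/-- The set `I(X)` of idempotent probability measures on a nonempty compact
Hausdorff space `X` is compact in `ℝ^{C(X,ℝ)}` with the product topology. -/
theorem isCompact_idempotentProbabilityMeasures
    {X : Type*} [TopologicalSpace X] [CompactSpace X] [T2Space X] [Nonempty X] :
    IsCompact {μ : C(X, ℝ) → ℝ | IsIdempotentProbabilityMeasure μ} :=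
  isCompact_idempotentProbabilityMeasures_general fun φ => (isCompact_range φ.continuous).isBounded
end

section
/- The functor I is monomorphic: if i : A → X is a continuous injective map between compact Hausdorff spaces, then the induced map I(i) : I(A) → I(X), defined by I(i)(μ)(φ) = μ(φ ∘ i) for φ ∈ C(X, ℝ), is injective. -/
theorem pushforward_isIdempotentProbabilityMeasure'
    {X Y : Type*} [TopologicalSpace X] [TopologicalSpace Y]
    (f : C(X, Y)) {μ : C(X, ℝ) → ℝ} (hμ : IsIdempotentProbabilityMeasure μ) :
    IsIdempotentProbabilityMeasure (fun φ : C(Y, ℝ) => μ (φ.comp f)) := by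
  obtain ⟨h1, h2, h3⟩ := hμ
  refine ⟨fun c => ?_, fun c φ => ?_, fun φ ψ => ?_⟩
  · have h : (ContinuousMap.const Y c).comp f = ContinuousMap.const X c :=
      ContinuousMap.ext fun _ => rfl
    simp only [h, h1]
  · have h : (φ + ContinuousMap.const Y c).comp f
        = φ.comp f + ContinuousMap.const X c := ContinuousMap.ext fun _ => rfl
    simp only [h, h2]
  · have h : (φ ⊔ ψ).comp f = φ.comp f ⊔ ψ.comp f :=
      ContinuousMap.ext fun _ => rfl
    simp only [h, h3]

/-- The induced map `I(f) : I(X) → I(Y)`, `I(f)(μ)(φ) = μ(φ ∘ f)`. -/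
noncomputable def Imap {X Y : Type*} [TopologicalSpace X] [TopologicalSpace Y]
    (f : C(X, Y)) (μ : {μ : C(X, ℝ) → ℝ // IsIdempotentProbabilityMeasure μ}) :
    {ν : C(Y, ℝ) → ℝ // IsIdempotentProbabilityMeasure ν} :=
  ⟨fun φ => μ.1 (φ.comp f), pushforward_isIdempotentProbabilityMeasure' f μ.2⟩

theorem Imap_injective_of_surjective_comp_right
    {A X : Type*} [TopologicalSpace A] [TopologicalSpace X] {i : C(A, X)}
    (hi : Function.Surjective fun φ : C(X, ℝ) => φ.comp i) :
    Function.Injective (Imap i) :=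
  fun _ _ h => Subtype.ext (hi.injective_comp_right (congrArg Subtype.val h))

theorem Imap_injective_general
    {A X : Type*} [TopologicalSpace A] [TopologicalSpace X] [NormalSpace X]
    {i : C(A, X)} (hi : Topology.IsClosedEmbedding i) :
    Function.Injective (Imap i) :=
  Imap_injective_of_surjective_comp_right (ContinuousMap.exists_extension hi)

/-- The functor `I` is monomorphic: for a continuous injective map
`i : A → X` of compact Hausdorff spaces, `I(i) : I(A) → I(X)` is injective. -/
theorem Imap_injective
    {A X : Type*} [TopologicalSpace A] [CompactSpace A] [T2Space A]
    [TopologicalSpace X] [CompactSpace X] [T2Space X]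
    (i : C(A, X)) (hi : Function.Injective i) :
    Function.Injective (Imap i) :=
  Imap_injective_general (i.continuous.isClosedEmbedding hi)
end
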